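/- arXiv:0911.5023 — 5 statements merged into one kernel-verified Lean document; each statement's English description precedes it below -/
import Mathlib

section
/- Let F be a finite field. The field F((T)) of formal Laurent series over F, equipped with the topology induced by its canonical valuation (where an element Σ_{i≥n} a_i T^i with a_n ≠ 0 has absolute value q^{-n}, q = |F|), is a locally compact topological field (i.e. the Laurent series field over a finite field, with its valuation topology, is a locally compact space and a topological field). -/
open WithZero in
theorem laurent_exists_nat (a : WithZero (Multiplicative ℤ)) (ha : a ≠ 0) :
    ∃ n : ℕ, exp (-(n : ℤ)) < a := by
  refine ⟨(1 - log a).toNat, ?_⟩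
  rw [← exp_log ha, exp_lt_exp, log_exp]
  omega

open WithZero in
theorem laurent_totallyBounded (F : Type*) [Field F] [Fintype F] :
    TotallyBounded {x : LaurentSeries F | Valued.v x ≤ (1 : WithZero (Multiplicative ℤ))} := by
  classical
  intro d hd
  obtain ⟨γ, -, hγ⟩ := (Valued.hasBasis_uniformity (LaurentSeries F)
    (WithZero (Multiplicative ℤ))).mem_iff.mp hd
  obtain ⟨n, hn⟩ := laurent_exists_nat
    (MonoidWithZeroHom.ValueGroup₀.embedding γ.1) (by simp)
  let S : Set (LaurentSeries F) := {x | Valued.v x ≤ (1 : WithZero (Multiplicative ℤ))}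
  let φ : S → (Fin n → F) := fun x i => x.1.coeff (i : ℤ)
  have : Nonempty S := ⟨⟨0, by simp [S]⟩⟩
  refine ⟨Set.range fun c => (Function.invFun φ c).1, Set.finite_range _, fun x hx => ?_⟩
  simp only [Set.mem_iUnion]
  refine ⟨_, ⟨φ ⟨x, hx⟩, rfl⟩, hγ ?_⟩
  change Valued.v.restrict ((Function.invFun φ (φ ⟨x, hx⟩)).1 - x) < _
  have h1 : φ (Function.invFun φ (φ ⟨x, hx⟩)) = φ ⟨x, hx⟩ := Function.invFun_eq ⟨_, rfl⟩
  generalize Function.invFun φ (φ ⟨x, hx⟩) = y at h1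
  rw [Valuation.restrict_lt_iff_lt_embedding]
  refine lt_of_le_of_lt ?_ hn
  rw [LaurentSeries.valuation_le_iff_coeff_lt_eq_zero]
  intro i hi
  rw [HahnSeries.coeff_sub, sub_eq_zero]
  have key : ∀ z ∈ S, ∀ i < (0 : ℤ), z.coeff i = 0 := fun z hz =>
    (LaurentSeries.valuation_le_iff_coeff_lt_eq_zero F (D := 0)).mp (by simpa [S] using hz)
  by_cases h0 : i < 0
  · rw [key _ y.2 i h0, key _ hx i h0]
  · push Not at h0
    lift i to ℕ using h0
    exact congrFun h1 ⟨i, by omega⟩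

/-- The field of formal Laurent series over a finite field, equipped with the topology
induced by its canonical (`X`-adic) valuation, is a locally compact topological field. -/
theorem laurentSeries_locallyCompact_topologicalField
    (F : Type*) [Field F] [Fintype F] :
    LocallyCompactSpace (LaurentSeries F) ∧ IsTopologicalDivisionRing (LaurentSeries F) := by
  refine ⟨?_, inferInstance⟩
  have hc : IsCompact {x : LaurentSeries F | Valued.v x ≤ (1 : WithZero (Multiplicative ℤ))} :=
    TotallyBounded.isCompact_of_isClosed (laurent_totallyBounded F)
      (Valued.isClosed_integer (LaurentSeries F))
  exact hc.locallyCompactSpace_of_mem_nhds_of_addGroup (x := 0)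
    ((Valued.isOpen_integer (LaurentSeries F)).mem_nhds (by simp))
end

section
/- Let F be a finite field with q elements, n ≥ 1, R = F[T]/(T^n), and V = (R → ℂ). For g : R → ℂ let M_g ∈ End_ℂ(V) be (M_g f)(x) = g(x) f(x); for a ∈ R let L_a ∈ End_ℂ(V) be (L_a f)(x) = f(x − a); and for b ∈ Fˣ let π(b) ∈ End_ℂ(V) be (π(b) f)(x) = f(b⁻¹ x), where Fˣ acts on R by multiplication by constants. Then the ℂ-subalgebra of the algebra End_ℂ(V) ⊗_ℂ ℂ[Fˣ] (tensor product with the complex group algebra of Fˣ) generated by the elements M_g ⊗ 1 (g : R → ℂ), L_a ⊗ 1 (a ∈ R), and π(b) ⊗ b (b ∈ Fˣ) is the whole algebra End_ℂ(V) ⊗_ℂ ℂ[Fˣ]. -/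
open TensorProduct

/-- The ring `R = F[T]/(T^n)`. -/
abbrev truncRing (F : Type*) [Field F] (n : ℕ) :=
  Polynomial F ⧸ Ideal.span {(Polynomial.X : Polynomial F) ^ n}

/-- The translation operator `(L_a f)(x) = f (x - a)` on `V = (G → ℂ)`. -/
noncomputable def translationOp {G : Type*} [AddCommGroup G] (a : G) :
    Module.End ℂ (G → ℂ) where
  toFun f := fun x => f (x - a)
  map_add' _ _ := rfl
  map_smul' _ _ := rfl

/-- The multiplication operator `(M_g f)(x) = g x * f x` on `V = (G → ℂ)`. -/
noncomputable def mulOp {G : Type*} [AddCommGroup G] (g : G → ℂ) :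
    Module.End ℂ (G → ℂ) where
  toFun f := fun x => g x * f x
  map_add' f₁ f₂ := by funext x; simp [mul_add]
  map_smul' c f := by funext x; simp [smul_eq_mul]; ring

/-- The operator `(π(b) f)(x) = f (b⁻¹ x)` on `V = (R → ℂ)`, `R = F[T]/(T^n)`,
where `Fˣ` acts on `R` by multiplication by constants. -/
noncomputable def scaleOp (F : Type*) [Field F] (n : ℕ) (b : Fˣ) :
    Module.End ℂ (truncRing F n → ℂ) where
  toFun f := fun x => f (algebraMap F (truncRing F n) ((b⁻¹ : Fˣ) : F) * x)
  map_add' _ _ := rfl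
  map_smul' _ _ := rfl

theorem end_eq_sum_mulOp_translationOp {G : Type*} [AddCommGroup G] [Fintype G] [DecidableEq G]
    (A : Module.End ℂ (G → ℂ)) :
    A = ∑ a : G, mulOp (fun x => A (Pi.single (x - a) 1) x) * translationOp a := by
  refine LinearMap.ext fun f => funext fun x => ?_
  have h1 : f = ∑ y : G, f y • (Pi.single y (1 : ℂ) : G → ℂ) := by
    funext z
    simp [Finset.sum_apply, Pi.single_apply]
  conv_lhs => rw [h1]
  rw [map_sum, Finset.sum_apply, LinearMap.sum_apply, Finset.sum_apply]
  rw [← (Equiv.subLeft x).sum_comp]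
  refine Finset.sum_congr rfl fun a _ => ?_
  simp only [map_smul, Pi.smul_apply, smul_eq_mul, Equiv.subLeft_apply, Module.End.mul_apply]
  exact mul_comm _ _

theorem scaleOp_inv_mul (F : Type*) [Field F] (n : ℕ) (b : Fˣ) :
    scaleOp F n b⁻¹ * scaleOp F n b = 1 := by
  refine LinearMap.ext fun f => funext fun x => ?_
  change f (algebraMap F (truncRing F n) ((b⁻¹ : Fˣ) : F) *
    (algebraMap F (truncRing F n) (((b⁻¹)⁻¹ : Fˣ) : F) * x)) = f x
  rw [← mul_assoc, ← map_mul, ← Units.val_mul]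
  simp

/-- For `R = F[T]/(T^n)`, `n ≥ 1`, the `ℂ`-subalgebra of `End_ℂ(R → ℂ) ⊗_ℂ ℂ[Fˣ]` generated
by the elements `M_g ⊗ 1`, `L_a ⊗ 1` and `π(b) ⊗ b` is the whole algebra. -/
theorem adjoin_affine_ops_tensor_groupAlgebra_eq_top (F : Type*) [Field F] [Fintype F]
    (n : ℕ) (hn : 1 ≤ n) :
    Algebra.adjoin ℂ
        ({x : Module.End ℂ (truncRing F n → ℂ) ⊗[ℂ] MonoidAlgebra ℂ Fˣ |
          (∃ g : truncRing F n → ℂ, x = mulOp g ⊗ₜ[ℂ] 1) ∨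
          (∃ a : truncRing F n, x = translationOp a ⊗ₜ[ℂ] 1) ∨
          (∃ b : Fˣ, x = scaleOp F n b ⊗ₜ[ℂ] MonoidAlgebra.of ℂ Fˣ b)}) = ⊤ := by
  classical
  have : Module.Finite F (truncRing F n) := (Polynomial.monic_X_pow n).finite_quotient
  have : Finite (truncRing F n) := Module.finite_of_finite F
  have : Fintype (truncRing F n) := Fintype.ofFinite _
  set S := Algebra.adjoin ℂ
        ({x : Module.End ℂ (truncRing F n → ℂ) ⊗[ℂ] MonoidAlgebra ℂ Fˣ |
          (∃ g : truncRing F n → ℂ, x = mulOp g ⊗ₜ[ℂ] 1) ∨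
          (∃ a : truncRing F n, x = translationOp a ⊗ₜ[ℂ] 1) ∨
          (∃ b : Fˣ, x = scaleOp F n b ⊗ₜ[ℂ] MonoidAlgebra.of ℂ Fˣ b)}) with hS
  have hA : ∀ A : Module.End ℂ (truncRing F n → ℂ),
      A ⊗ₜ[ℂ] (1 : MonoidAlgebra ℂ Fˣ) ∈ S := by
    intro A
    rw [end_eq_sum_mulOp_translationOp A, TensorProduct.sum_tmul]
    refine Subalgebra.sum_mem _ fun a _ => ?_
    rw [← mul_one (1 : MonoidAlgebra ℂ Fˣ), ← Algebra.TensorProduct.tmul_mul_tmul]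
    exact Subalgebra.mul_mem _ (Algebra.subset_adjoin (Or.inl ⟨_, rfl⟩))
      (Algebra.subset_adjoin (Or.inr (Or.inl ⟨_, rfl⟩)))
  have hb : ∀ b : Fˣ, (1 : Module.End ℂ (truncRing F n → ℂ)) ⊗ₜ[ℂ] MonoidAlgebra.of ℂ Fˣ b ∈ S := by
    intro b
    rw [← scaleOp_inv_mul F n b, ← one_mul (MonoidAlgebra.of ℂ Fˣ b),
      ← Algebra.TensorProduct.tmul_mul_tmul]
    exact Subalgebra.mul_mem _ (hA _) (Algebra.subset_adjoin (Or.inr (Or.inr ⟨_, rfl⟩)))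
  have hm : ∀ m : MonoidAlgebra ℂ Fˣ, (1 : Module.End ℂ (truncRing F n → ℂ)) ⊗ₜ[ℂ] m ∈ S := by
    intro m
    induction m using MonoidAlgebra.induction_on with
    | of b => exact hb b
    | add x y hx hy => rw [TensorProduct.tmul_add]; exact Subalgebra.add_mem _ hx hy
    | smul r x hx => rw [TensorProduct.tmul_smul]; exact Subalgebra.smul_mem _ hx r
  rw [eq_top_iff]
  rintro x -
  induction x using TensorProduct.induction_on with
  | zero => exact Subalgebra.zero_mem _
  | add x y hx hy => exact Subalgebra.add_mem _ hx hy
  | tmul A m =>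
    rw [← mul_one A, ← one_mul m, ← Algebra.TensorProduct.tmul_mul_tmul]
    exact Subalgebra.mul_mem _ (hA A) (hm m)
end

section
/- Let F be a finite field with q elements. On the Hilbert space ℓ²(F[T]) with canonical orthonormal basis (ξ_r)_{r ∈ F[T]}, let U^a for a ∈ F[T] be the unitary determined by U^a ξ_r = ξ_{a+r}, and let S_T be the isometry determined by S_T ξ_r = ξ_{T·r}. Then the q isometries U^c S_T, c ∈ F (constants), have mutually orthogonal ranges, i.e. (U^c S_T)* (U^{c'} S_T) = 0 for c ≠ c' in F, and their range projections sum to the identity: Σ_{c ∈ F} (U^c S_T)(U^c S_T)* = 1. -/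
open scoped Classical

/-- The Hilbert space `ℓ²(F[T])`. -/
noncomputable abbrev l2Poly (F : Type*) [Field F] := lp (fun _ : Polynomial F => ℂ) 2

theorem aux_ext (F : Type*) [Field F] (A B : l2Poly F →L[ℂ] l2Poly F)
    (h : ∀ r : Polynomial F, A (lp.single 2 r 1) = B (lp.single 2 r 1)) : A = B := by
  ext1 f
  have hf := lp.hasSum_single (by simp : (2 : ENNReal) ≠ ⊤) f
  have key : ∀ r : Polynomial F, A (lp.single 2 r (f r)) = B (lp.single 2 r (f r)) := by
    intro r
    have : (lp.single 2 r (f r) : l2Poly F) = f r • lp.single 2 r (1 : ℂ) := by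
      rw [← lp.single_smul]; simp
    rw [this, map_smul, map_smul, h]
  have h1 := hf.mapL A
  have h2 := hf.mapL B
  simp only [key] at h1
  exact h1.unique h2

theorem aux_adj (F : Type*) [Field F] (V : l2Poly F →L[ℂ] l2Poly F) (c : F)
    (hV : ∀ r : Polynomial F,
      V (lp.single 2 r 1) = lp.single 2 (Polynomial.C c + Polynomial.X * r) 1)
    (s : Polynomial F) :
    ContinuousLinearMap.adjoint V (lp.single 2 s 1) =
      if s.coeff 0 = c then lp.single 2 s.divX 1 else 0 := by
  have hd := Polynomial.X_mul_divX_add s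
  ext r
  have h1 := lp.inner_single_left (𝕜 := ℂ) r (1 : ℂ)
    (ContinuousLinearMap.adjoint V (lp.single 2 s 1))
  rw [ContinuousLinearMap.adjoint_inner_right, hV, lp.inner_single_left] at h1
  simp only [RCLike.inner_apply, map_one, mul_one] at h1
  rw [← h1]
  by_cases hc : s.coeff 0 = c
  · rw [if_pos hc, lp.single_apply, lp.single_apply]
    simp only [Pi.single_apply]
    congr 1
    apply propext
    constructor
    · intro h
      rw [← h]
      ext n
      simp [Polynomial.coeff_divX, Polynomial.coeff_C]
    · intro h
      rw [h, add_comm, ← hc, hd]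
  · rw [if_neg hc, lp.single_apply, Pi.single_apply, if_neg]
    · simp
    · intro h
      apply hc
      rw [← h]; simp

/-- On `ℓ²(F[T])`, with `U^a` the unitary determined by `U^a ξ_r = ξ_{a+r}` and `S_T` the
isometry determined by `S_T ξ_r = ξ_{T r}`, the `q` isometries `U^c S_T` (`c ∈ F`) have
mutually orthogonal ranges, and their range projections sum to the identity. -/
theorem ringCstarAlgebra_cuntz_relations (F : Type*) [Field F] [Fintype F]
    (U : Polynomial F → (l2Poly F →L[ℂ] l2Poly F)) (S : l2Poly F →L[ℂ] l2Poly F)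
    (hU : ∀ a r : Polynomial F, U a (lp.single 2 r 1) = lp.single 2 (a + r) 1)
    (hS : ∀ r : Polynomial F, S (lp.single 2 r 1) = lp.single 2 (Polynomial.X * r) 1) :
    (∀ c c' : F, c ≠ c' →
      ContinuousLinearMap.adjoint (U (Polynomial.C c) * S) * (U (Polynomial.C c') * S) = 0) ∧
    (∑ c : F, (U (Polynomial.C c) * S) *
        ContinuousLinearMap.adjoint (U (Polynomial.C c) * S) = 1) := by
  have hV : ∀ (c : F) (r : Polynomial F), (U (Polynomial.C c) * S) (lp.single 2 r 1) =
      lp.single 2 (Polynomial.C c + Polynomial.X * r) 1 := by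
    intro c r
    rw [ContinuousLinearMap.mul_apply, hS, hU]
  have hA := fun c => aux_adj F _ c (hV c)
  constructor
  · intro c c' hcc
    apply aux_ext
    intro r
    rw [ContinuousLinearMap.mul_apply, hV, hA, if_neg]
    · simp
    · simpa using hcc.symm
  · apply aux_ext
    intro s
    rw [ContinuousLinearMap.sum_apply, Finset.sum_eq_single (s.coeff 0)]
    · rw [ContinuousLinearMap.mul_apply, hA, if_pos rfl, hV, add_comm,
        Polynomial.X_mul_divX_add]
      rfl
    · intro c _ hc
      rw [ContinuousLinearMap.mul_apply, hA, if_neg hc.symm, map_zero]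
    · simp
end

section
/- Let q ≥ 2 be an integer and let A : ℤ^{q−1} → ℤ^{q−1} be the additive endomorphism given by the matrix with all diagonal entries 2 and all off-diagonal entries 1, i.e. A(x) = x + (Σ_i x_i)·𝟙 where 𝟙 is the all-ones vector. Then the direct limit (colimit) of the sequence ℤ^{q−1} →A→ ℤ^{q−1} →A→ ℤ^{q−1} →A→ ⋯ indexed by ℕ is isomorphic, as an abelian group, to ℤ[1/q] ⊕ ℤ^{q−2}, where ℤ[1/q] denotes the additive group of the localization of ℤ at the powers of q. -/
/-- The endomorphism of `ℤ^{q-1}` given by the matrix with diagonal entries `2` and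
off-diagonal entries `1`, i.e. `A x = x + (Σ_i x_i)·𝟙`. -/
def allOnesPlusIdEnd (q : ℕ) : AddMonoid.End (Fin (q - 1) → ℤ) :=
  { toFun := fun x => fun j => x j + ∑ i, x i
    map_zero' := by funext j; simp
    map_add' := fun x y => by
      funext j
      simp [Finset.sum_add_distrib]
      ring }

open Finset in
/-- The level-`k` map to `ℤ[1/q] × ℤ^{q-2}` for `q = m+2`. -/
noncomputable def levelMap (m k : ℕ) :
    (Fin (m + 1) → ℤ) →+ (Localization.Away ((m + 2 : ℕ) : ℤ) × (Fin m → ℤ)) where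
  toFun x := (algebraMap ℤ (Localization.Away ((m + 2 : ℕ) : ℤ))
      (x 0 - (∑ i ∈ range k, ((m + 2 : ℕ) : ℤ) ^ i) * ∑ i : Fin m, (x i.succ - x 0)) *
      IsLocalization.Away.invSelf ((m + 2 : ℕ) : ℤ) ^ k, fun i => x i.succ - x 0)
  map_zero' := by ext <;> simp
  map_add' x y := by
    refine Prod.ext ?_ ?_
    · simp only [Pi.add_apply, Prod.fst_add]
      rw [← add_mul, ← map_add]
      congr 2
      have : ∑ i : Fin m, (x i.succ + y i.succ - (x 0 + y 0)) =
          ∑ i : Fin m, (x i.succ - x 0) + ∑ i : Fin m, (y i.succ - y 0) := by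
        rw [← Finset.sum_add_distrib]
        exact Finset.sum_congr rfl fun i _ => by ring
      rw [this]
      ring
    · funext i
      simp only [Pi.add_apply, Prod.snd_add]
      ring

theorem levelMap_step_aux (m k : ℕ) (x y : Fin (m + 1) → ℤ)
    (hA : ∀ j : Fin (m + 1), y j = x j + ∑ i : Fin (m + 1), x i) :
    levelMap m (k + 1) y = levelMap m k x := by
  have hd : ∀ j : Fin m, y j.succ - y 0 = x j.succ - x 0 := by
    intro j
    rw [hA, hA]; ring
  have hy0 : y 0 = ((m + 2 : ℕ) : ℤ) * x 0 + ∑ i : Fin m, (x i.succ - x 0) := by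
    rw [hA, Fin.sum_univ_succ, Finset.sum_sub_distrib]
    simp
    ring
  refine Prod.ext ?_ (funext hd)
  change algebraMap ℤ (Localization.Away ((m + 2 : ℕ) : ℤ)) (y 0 - (∑ i ∈ Finset.range (k + 1), ((m + 2 : ℕ) : ℤ) ^ i) *
    ∑ i : Fin m, (y i.succ - y 0)) * IsLocalization.Away.invSelf ((m + 2 : ℕ) : ℤ) ^ (k + 1) =
    algebraMap ℤ (Localization.Away ((m + 2 : ℕ) : ℤ)) (x 0 - (∑ i ∈ Finset.range k, ((m + 2 : ℕ) : ℤ) ^ i) *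
    ∑ i : Fin m, (x i.succ - x 0)) * IsLocalization.Away.invSelf ((m + 2 : ℕ) : ℤ) ^ k
  simp only [hd]
  rw [hy0, Finset.sum_range_succ', pow_zero]
  simp only [pow_succ]
  rw [← Finset.sum_mul]
  generalize ∑ i : Fin m, (x i.succ - x 0) = s
  generalize ∑ i ∈ Finset.range k, ((m + 2 : ℕ) : ℤ) ^ i = t
  have hu := IsLocalization.Away.mul_invSelf (S := Localization.Away ((m + 2 : ℕ) : ℤ))
    ((m + 2 : ℕ) : ℤ)
  have : ((m + 2 : ℕ) : ℤ) * x 0 + s - (t * ((m + 2 : ℕ) : ℤ) + 1) * s =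
      ((m + 2 : ℕ) : ℤ) * (x 0 - t * s) := by ring
  rw [this, map_mul]
  linear_combination (algebraMap ℤ (Localization.Away ((m + 2 : ℕ) : ℤ)) (x 0 - t * s) *
    IsLocalization.Away.invSelf ((m + 2 : ℕ) : ℤ) ^ k) * hu

theorem levelMap_step (m k : ℕ) (x : Fin (m + 1) → ℤ) :
    levelMap m (k + 1) (allOnesPlusIdEnd (m + 2) x : Fin (m + 1) → ℤ) = levelMap m k x :=
  levelMap_step_aux m k x _ fun _ => rfl

theorem levelMap_pow (m k n : ℕ) (x : Fin (m + 1) → ℤ) :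
    levelMap m (k + n) ((allOnesPlusIdEnd (m + 2) ^ n : AddMonoid.End (Fin (m + 1) → ℤ)) x)
      = levelMap m k x := by
  induction n with
  | zero => rfl
  | succ n ih =>
    rw [pow_succ']
    exact (levelMap_step m (k + n) _).trans ih

theorem levelMap_injective (m k : ℕ) : Function.Injective (levelMap m k) := by
  intro x y h
  have h1 := congrArg Prod.fst h
  have hd : ∀ j : Fin m, x j.succ - x 0 = y j.succ - y 0 :=
    fun j => congrFun (congrArg Prod.snd h) j
  have hu := IsLocalization.Away.mul_invSelf (S := Localization.Away ((m + 2 : ℕ) : ℤ))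
    ((m + 2 : ℕ) : ℤ)
  have hunit : IsUnit (IsLocalization.Away.invSelf (S := Localization.Away ((m + 2 : ℕ) : ℤ))
      ((m + 2 : ℕ) : ℤ) ^ k) := (IsUnit.of_mul_eq_one_right _ hu).pow k
  have h2 := hunit.mul_right_cancel h1
  have hinj : Function.Injective (algebraMap ℤ (Localization.Away ((m + 2 : ℕ) : ℤ))) :=
    IsLocalization.injective (M := Submonoid.powers ((m + 2 : ℕ) : ℤ)) _
      (powers_le_nonZeroDivisors_of_noZeroDivisors (by omega))
  have h3 := hinj h2
  simp only [hd] at h3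
  have h0 : x 0 = y 0 := by linarith
  funext j
  refine Fin.cases h0 (fun i => ?_) j
  have := hd i
  linarith

theorem levelMap_surj (m : ℕ) (z : Localization.Away ((m + 2 : ℕ) : ℤ) × (Fin m → ℤ)) :
    ∃ k x, levelMap m k x = z := by
  obtain ⟨z, d⟩ := z
  obtain ⟨k, a, h⟩ := IsLocalization.Away.surj ((m + 2 : ℕ) : ℤ) z
  have hu := IsLocalization.Away.mul_invSelf (S := Localization.Away ((m + 2 : ℕ) : ℤ))
    ((m + 2 : ℕ) : ℤ)
  let c : ℤ := a + (∑ i ∈ Finset.range k, ((m + 2 : ℕ) : ℤ) ^ i) * ∑ i, d i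
  refine ⟨k, Fin.cons c (fun i => d i + c), Prod.ext ?_ ?_⟩
  · simp only [levelMap, AddMonoidHom.coe_mk, ZeroHom.coe_mk, Fin.cons_zero, Fin.cons_succ,
      add_sub_cancel_right, c]
    rw [← h, mul_assoc, ← mul_pow, hu, one_pow, mul_one]
  · funext i
    simp [levelMap]

/-- The direct limit of `ℤ^{q-1} →A→ ℤ^{q-1} →A→ ⋯` (all connecting maps equal to `A`,
`A` the matrix with diagonal `2` and off-diagonal `1`) is isomorphic as an abelian group
to `ℤ[1/q] ⊕ ℤ^{q-2}`. -/
theorem directLimit_allOnesPlusId_iso (q : ℕ) (hq : 2 ≤ q) :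
    Nonempty
      (AddCommGroup.DirectLimit (fun _ : ℕ => Fin (q - 1) → ℤ)
          (fun i j _ => show (Fin (q - 1) → ℤ) →+ (Fin (q - 1) → ℤ) from
              (allOnesPlusIdEnd q ^ (j - i) : AddMonoid.End (Fin (q - 1) → ℤ))) ≃+
        (Localization.Away (q : ℤ) × (Fin (q - 2) → ℤ))) := by
  obtain ⟨m, rfl⟩ : ∃ m, q = m + 2 := ⟨q - 2, by omega⟩
  have H : ∀ i j (hij : i ≤ j) (x : Fin (m + 1) → ℤ),
      levelMap m j ((allOnesPlusIdEnd (m + 2) ^ (j - i) :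
        AddMonoid.End (Fin (m + 1) → ℤ)) x) = levelMap m i x := by
    intro i j hij x
    obtain ⟨n, rfl⟩ := Nat.exists_eq_add_of_le hij
    rw [Nat.add_sub_cancel_left]
    exact levelMap_pow m i n x
  refine ⟨AddEquiv.ofBijective (AddCommGroup.DirectLimit.lift _ _
    (Localization.Away ((m + 2 : ℕ) : ℤ) × (Fin m → ℤ)) (fun k => levelMap m k) H) ⟨?_, ?_⟩⟩
  · exact AddCommGroup.DirectLimit.lift_injective _ _ _ (fun k => levelMap_injective m k)
  · intro z
    obtain ⟨k, x, h⟩ := levelMap_surj m z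
    exact ⟨AddCommGroup.DirectLimit.of _ _ k x,
      (AddCommGroup.DirectLimit.lift_of _ _ _ _ _).trans h⟩
end

section
/- Let q ≥ 2 be an integer and let M := ℤ[1/q] × ℤ^{q−2}, where ℤ[1/q] is the additive group of the localization of ℤ at the powers of q. Define the additive endomorphism φ : M → M by φ(x, y) = (q⁻¹·(x − Σ_i y_i), y), where Σ_i y_i ∈ ℤ is viewed inside ℤ[1/q]. Then: (1) φ is an automorphism of M; (2) the image of id − φ equals ℤ[1/q] × {0}; (3) the kernel of id − φ equals {(x, y) ∈ M : (q−1)x + Σ_i y_i = 0}, and this kernel is a free abelian group of rank q−2 with basis the q−2 elements (1, −𝟙 − e_j) for j = 1, …, q−2, where 𝟙 ∈ ℤ^{q−2} is the all-ones vector and e_j the j-th standard basis vector. -/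
/-- The endomorphism `φ(x, y) = (q⁻¹·(x − Σ_i y_i), y)` of `M = ℤ[1/q] × ℤ^{q-2}`. -/
noncomputable def qDualBott (q : ℕ) :
    Localization.Away (q : ℤ) × (Fin (q - 2) → ℤ) →
      Localization.Away (q : ℤ) × (Fin (q - 2) → ℤ) :=
  fun m =>
    (IsLocalization.Away.invSelf (S := Localization.Away (q : ℤ)) (q : ℤ) *
        (m.1 - algebraMap ℤ (Localization.Away (q : ℤ)) (∑ i, m.2 i)),
      m.2)

theorem qdb_key (q : ℕ) (w : Localization.Away (q : ℤ)) :
    ∃ a t : ℤ, w = (a : Localization.Away (q : ℤ)) - ((q : Localization.Away (q : ℤ)) - 1) * t * w := by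
  obtain ⟨n, a, h⟩ := IsLocalization.Away.surj (q : ℤ) w
  have hd : ((q : ℤ) - 1) ∣ (q : ℤ) ^ n - 1 := by
    simpa using sub_dvd_pow_sub_pow (q : ℤ) 1 n
  obtain ⟨t, ht⟩ := hd
  refine ⟨a, t, ?_⟩
  have ht' := congrArg (Int.cast : ℤ → Localization.Away (q : ℤ)) ht
  push_cast at ht'
  simp only [eq_intCast, Int.cast_natCast] at h
  linear_combination h - w * ht'

theorem qdb_inv (q : ℕ) : (q : Localization.Away (q : ℤ)) *
    IsLocalization.Away.invSelf (S := Localization.Away (q : ℤ)) (q : ℤ) = 1 := by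
  have := IsLocalization.Away.mul_invSelf (S := Localization.Away (q : ℤ)) (q : ℤ)
  simpa using this

theorem qdb_inj (q : ℕ) (hq : 2 ≤ q) (a : ℤ) (h : (a : Localization.Away (q : ℤ)) = 0) :
    a = 0 := by
  have hi : Function.Injective (algebraMap ℤ (Localization.Away (q : ℤ))) :=
    IsLocalization.injective _ (M := Submonoid.powers (q : ℤ))
      (powers_le_nonZeroDivisors_of_noZeroDivisors (by positivity))
  apply hi
  simpa using h

theorem qdb_ker (q : ℕ) (m : Localization.Away (q : ℤ) × (Fin (q - 2) → ℤ)) :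
    m - qDualBott q m = 0 ↔
      ((q : Localization.Away (q : ℤ)) - 1) * m.1 + ((∑ i, m.2 i : ℤ) : Localization.Away (q : ℤ)) = 0 := by
  have hI := qdb_inv q
  obtain ⟨x, y⟩ := m
  simp only [qDualBott, Prod.ext_iff, Prod.fst_sub, Prod.snd_sub, sub_self, Prod.fst_zero,
    Prod.snd_zero, and_true, eq_intCast]
  generalize IsLocalization.Away.invSelf (S := Localization.Away (q : ℤ)) (q : ℤ) = I at *
  constructor
  · intro h
    linear_combination (q : Localization.Away (q : ℤ)) * h + (x - ((∑ i, y i : ℤ) : Localization.Away (q : ℤ))) * hI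
  · intro h
    linear_combination I * h - x * hI

theorem qdb_sum (q : ℕ) (c : Fin (q - 2) → ℤ) :
    ∑ j : Fin (q - 2), c j • (((1 : Localization.Away (q : ℤ)),
            fun i => -1 - if i = j then 1 else 0) :
              Localization.Away (q : ℤ) × (Fin (q - 2) → ℤ)) =
    (((∑ j, c j : ℤ) : Localization.Away (q : ℤ)), fun i => - (∑ j, c j) - c i) := by
  ext i
  · simp [Prod.fst_sum]
  · simp [Prod.snd_sum, mul_sub, Finset.sum_sub_distrib]

/-- For `M = ℤ[1/q] × ℤ^{q-2}` and `φ(x,y) = (q⁻¹(x − Σ y_i), y)`: `φ` is an additive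
automorphism of `M`; the image of `id − φ` is `ℤ[1/q] × {0}`; and the kernel of `id − φ` is
`{(x,y) : (q−1)x + Σ y_i = 0}`, which is free abelian of rank `q−2` with basis the elements
`(1, −𝟙 − e_j)`, `j = 1, …, q−2`. -/
theorem qDualBott_automorphism_range_ker (q : ℕ) (hq : 2 ≤ q) :
    (∀ u v, qDualBott q (u + v) = qDualBott q u + qDualBott q v) ∧
    Function.Bijective (qDualBott q) ∧
    Set.range (fun m => m - qDualBott q m) =
      {m : Localization.Away (q : ℤ) × (Fin (q - 2) → ℤ) | m.2 = 0} ∧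
    {m : Localization.Away (q : ℤ) × (Fin (q - 2) → ℤ) | m - qDualBott q m = 0} =
      {m | algebraMap ℤ (Localization.Away (q : ℤ)) ((q : ℤ) - 1) * m.1 +
          algebraMap ℤ (Localization.Away (q : ℤ)) (∑ i, m.2 i) = 0} ∧
    (∀ j : Fin (q - 2),
      ((1 : Localization.Away (q : ℤ)), fun i => -1 - if i = j then 1 else 0) -
        qDualBott q ((1 : Localization.Away (q : ℤ)),
          fun i => -1 - if i = j then 1 else 0) = 0) ∧
    (∀ m : Localization.Away (q : ℤ) × (Fin (q - 2) → ℤ), m - qDualBott q m = 0 →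
      ∃! c : Fin (q - 2) → ℤ,
        m = ∑ j : Fin (q - 2),
          c j • (((1 : Localization.Away (q : ℤ)),
            fun i => -1 - if i = j then 1 else 0) :
              Localization.Away (q : ℤ) × (Fin (q - 2) → ℤ))) := by
  have hI := qdb_inv q
  refine ⟨?_, ?_, ?_, ?_, ?_, ?_⟩
  · rintro ⟨x, y⟩ ⟨x', y'⟩
    simp only [qDualBott, Prod.mk_add_mk, Pi.add_apply, Finset.sum_add_distrib, map_add,
      Prod.mk.injEq, and_true]
    ring
  · constructor
    · rintro ⟨x, y⟩ ⟨x', y'⟩ h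
      simp only [qDualBott, Prod.mk.injEq] at h ⊢
      obtain ⟨h1, rfl⟩ := h
      refine ⟨?_, rfl⟩
      generalize IsLocalization.Away.invSelf (S := Localization.Away (q : ℤ)) (q : ℤ) = I at *
      linear_combination (q : Localization.Away (q : ℤ)) * h1 - (x - x') * hI
    · rintro ⟨x, y⟩
      refine ⟨(q * x + algebraMap ℤ _ (∑ i, y i), y), ?_⟩
      simp only [qDualBott, Prod.mk.injEq, and_true]
      linear_combination x * hI
  · ext ⟨w, z⟩
    simp only [Set.mem_range, Set.mem_setOf_eq]
    constructor
    · rintro ⟨m, hm⟩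
      have := congrArg Prod.snd hm
      simpa [qDualBott] using this.symm
    · rintro rfl
      have hs : ∃ (x : Localization.Away (q : ℤ)) (y : Fin (q - 2) → ℤ),
          ((q : Localization.Away (q : ℤ)) - 1) * x +
            ((∑ i, y i : ℤ) : Localization.Away (q : ℤ)) = q * w := by
        rcases Nat.lt_or_ge 2 q with h | h
        · obtain ⟨a, t, h'⟩ := qdb_key q (q * w)
          refine ⟨-(t * (q * w)), Pi.single ⟨0, by omega⟩ a, ?_⟩
          rw [Finset.sum_pi_single']
          simp only [Finset.mem_univ, if_true]
          linear_combination -h'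
        · have h2 : q = 2 := by omega
          refine ⟨q * w, 0, ?_⟩
          have : (q : Localization.Away (q : ℤ)) = 2 := by
            have := congrArg (Nat.cast : ℕ → Localization.Away (q : ℤ)) h2
            simpa using this
          simp only [Pi.zero_apply, Finset.sum_const_zero, Int.cast_zero]
          linear_combination (q * w) * this
      obtain ⟨x, y, h⟩ := hs
      refine ⟨(x, y), ?_⟩
      simp only [qDualBott, Prod.mk_sub_mk, sub_self, Prod.mk.injEq, and_true, eq_intCast]
      generalize IsLocalization.Away.invSelf (S := Localization.Away (q : ℤ)) (q : ℤ) = I at *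
      linear_combination I * h + (w - x) * hI
  · ext m
    simp only [Set.mem_setOf_eq]
    rw [qdb_ker]
    simp
  · intro j
    rw [qdb_ker]
    simp only [Finset.sum_sub_distrib, Finset.sum_const, Finset.sum_ite_eq', Finset.card_univ,
      Fintype.card_fin, Finset.mem_univ, if_true]
    push_cast [Nat.cast_sub hq, nsmul_eq_mul]
    ring
  · rintro ⟨x, y⟩ hm
    rw [qdb_ker] at hm
    simp only at hm
    simp only [qdb_sum]
    have hcard : ((q - 2 : ℕ) : ℤ) = q - 2 := by push_cast [Nat.cast_sub hq]; ring
    have hq0 : (q : ℤ) - 1 ≠ 0 := by omega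
    obtain ⟨a, t, h⟩ := qdb_key q x
    obtain ⟨k, rfl⟩ : ∃ k : ℤ, x = (k : Localization.Away (q : ℤ)) := by
      refine ⟨a + t * ∑ i, y i, ?_⟩
      rw [Int.cast_add, Int.cast_mul]
      linear_combination h - t * hm
    have hk : ((q : ℤ) - 1) * k + ∑ i, y i = 0 := by
      apply qdb_inj q hq
      rw [← hm]
      simp
    have hsum : ∑ i, (-k - y i) = k := by
      rw [Finset.sum_sub_distrib, Finset.sum_const, Finset.card_univ, Fintype.card_fin,
        nsmul_eq_mul, hcard]
      linear_combination -hk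
    refine ⟨fun i => -k - y i, ?_, ?_⟩
    · simp only [hsum, Prod.mk.injEq, true_and]
      ext i
      ring
    · intro c hc
      simp only [Prod.mk.injEq] at hc
      have hy := hc.2
      have h3 : ∑ i, y i = -(((q : ℤ) - 1) * ∑ j, c j) := by
        rw [hy]
        rw [Finset.sum_sub_distrib, Finset.sum_const, Finset.card_univ, Fintype.card_fin,
          nsmul_eq_mul, hcard]
        ring
      have h4 : ∑ j, c j = k := by
        apply mul_left_cancel₀ hq0
        linarith
      ext i
      have := congrFun hy i
      simp only [h4] at this
      linarith
end
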